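/- arXiv:1601.05383 — 2 statements merged into one kernel-verified Lean document; each statement's English description precedes it below -/
import Mathlib

section
/- Let R be a Noetherian Henselian local commutative ring, T a commutative R-algebra, and M a nonzero T-module which is finitely generated as an R-module. Then there exist finitely many nonzero T-submodules M₁, …, Mₙ of M such that M is the internal direct sum of M₁, …, Mₙ and, for each i, the quotient ring T / Ann_T(Mᵢ) is a local ring. -/
open TensorProduct Polynomial

theorem hens_section {R R' : Type*} [CommRing R] [HenselianLocalRing R] [CommRing R'] [Algebra R R']
    [Algebra.Etale R R'] (P : Ideal R') [P.IsPrime] [P.LiesOver (IsLocalRing.maximalIdeal R)]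
    (hP : Function.Bijective (Ideal.ResidueField.mapₐ (IsLocalRing.maximalIdeal R) P
      (Algebra.ofId _ _) (P.over_def _))) :
    ∃ s : R' →ₐ[R] R, (IsLocalRing.maximalIdeal R).comap s = P := by
  have hsurj : Function.Surjective (algebraMap R P.ResidueField) := by
    intro y
    obtain ⟨z, rfl⟩ := hP.2 y
    obtain ⟨r, rfl⟩ := (IsLocalRing.maximalIdeal R).algebraMap_residueField_surjective z
    exact ⟨r, by simp⟩
  have hker : ∀ r : R, algebraMap R P.ResidueField r = 0 ↔ r ∈ IsLocalRing.maximalIdeal R := by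
    intro r
    rw [IsScalarTower.algebraMap_apply R R' P.ResidueField, Ideal.algebraMap_residueField_eq_zero,
      P.over_def (IsLocalRing.maximalIdeal R)]
    rfl
  obtain ⟨f, hf, hst⟩ := Algebra.IsEtaleAt.exists_isStandardEtale (R := R) P
  obtain ⟨⟨Q⟩⟩ := hst
  have hfu : IsUnit (IsScalarTower.toAlgHom R R' P.ResidueField f) := by
    rw [isUnit_iff_ne_zero]
    simpa [Ideal.algebraMap_residueField_eq_zero] using hf
  let ψ : Localization.Away f →ₐ[R] P.ResidueField :=
    IsLocalization.liftAlgHom (M := .powers f) (f := IsScalarTower.toAlgHom R R' P.ResidueField)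
      (by rintro ⟨_, n, rfl⟩; simpa using hfu.pow n)
  have hψ : ∀ r : R', ψ (algebraMap _ _ r) = algebraMap R' P.ResidueField r := by
    intro r; simp [ψ]
  obtain ⟨a₀, ha₀⟩ := hsurj (ψ Q.x)
  have hm := Q.hasMap.map ψ
  have h1 := hm.1
  have h2 := hm.2
  have h3 := hm.isUnit_derivative_f
  rw [← ha₀, aeval_algebraMap_apply, coe_aeval_eq_eval] at h1 h2 h3
  obtain ⟨a, har, haa⟩ := HenselianLocalRing.is_henselian Q.f Q.monic_f a₀ ((hker _).1 h1) (by
    by_contra h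
    exact h3.ne_zero ((hker _).2 h))
  have haa' : algebraMap R P.ResidueField a = ψ Q.x := by
    rw [← ha₀, ← sub_eq_zero, ← map_sub]; exact (hker _).2 haa
  have hmap : Q.HasMap a := by
    refine ⟨by simpa using har, ?_⟩
    by_contra h
    have h4 := (hker _).2 h
    rw [← aeval_algebraMap_apply, haa', ← ha₀, aeval_algebraMap_apply, coe_aeval_eq_eval] at h4
    exact h2.ne_zero h4
  let σ : Localization.Away f →ₐ[R] R := (Q.lift a hmap).comp Q.equivRing.toAlgHom
  have hσ : (Algebra.ofId R P.ResidueField).comp σ = ψ := by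
    apply Q.hom_ext
    simp [σ, Algebra.ofId_apply, haa', StandardEtalePair.lift_X]
  refine ⟨σ.comp (IsScalarTower.toAlgHom R R' _), ?_⟩
  ext r
  rw [Ideal.mem_comap, ← hker, ← Ideal.algebraMap_residueField_eq_zero (I := P), ← hψ, ← hσ]
  rfl

theorem hens_idem {R S : Type*} [CommRing R] [HenselianLocalRing R] [CommRing S] [Algebra R S]
    [Module.Finite R S] : ∃ (n : ℕ) (e : Fin n → S), CompleteOrthogonalIdempotents e ∧
      ∀ i (N₁ N₂ : Ideal S), N₁.IsMaximal → N₂.IsMaximal → e i ∉ N₁ → e i ∉ N₂ → N₁ = N₂ := by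
  obtain ⟨R', _, _, _, P, _, _, n, e, he, P', _, _, hP, hP', H⟩ :=
    Algebra.exists_etale_completeOrthogonalIdempotents_forall_liesOver_eq (S := S)
      (IsLocalRing.maximalIdeal R)
  obtain ⟨s, hs⟩ := hens_section P hP
  let φ : R' ⊗[R] S →ₐ[R] S :=
    Algebra.TensorProduct.lift ((Algebra.ofId R S).comp s) (AlgHom.id R S) (fun _ _ ↦ .all _ _)
  have hφ : Function.Surjective φ := fun x ↦ ⟨1 ⊗ₜ x, by simp [φ]⟩
  have key : ∀ N : Ideal S, N.IsMaximal → (N.comap φ).IsPrime ∧ (N.comap φ).LiesOver P := by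
    intro N hN
    refine ⟨inferInstance, ⟨?_⟩⟩
    have h1 : N.under R = IsLocalRing.maximalIdeal R :=
      IsLocalRing.eq_maximalIdeal (Ideal.isMaximal_comap_of_isIntegral_of_isMaximal N)
    rw [← hs, ← h1]
    ext r
    simp [Ideal.under, φ, Algebra.ofId_apply]
  have he' := he.map φ.toRingHom
  have hlast : φ (e (.last n)) = 0 := by
    have hj : φ (e (.last n)) ∈ Ideal.jacobson (⊥ : Ideal S) := by
      rw [Ideal.jacobson, Ideal.mem_sInf]
      rintro N ⟨-, hN⟩
      exact (H _ (key N hN).1 (key N hN).2).1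
    have hid : IsIdempotentElem (φ (e (.last n))) := he'.idem _
    have hu := Ideal.mem_jacobson_bot.1 hj (-1)
    refine (hu.mul_left_eq_zero).1 ?_
    linear_combination -hid.eq
  refine ⟨n, fun i ↦ φ (e i.castSucc), ⟨⟨fun i ↦ he'.idem _, fun i j hij ↦ he'.ortho ?_⟩, ?_⟩, ?_⟩
  · simpa using hij
  · have := he'.complete
    rw [Fin.sum_univ_castSucc] at this
    simpa [hlast] using this
  · intro i N₁ N₂ h₁ h₂ hi₁ hi₂
    apply Ideal.comap_injective_of_surjective φ hφ
    rw [(H _ (key N₁ h₁).1 (key N₁ h₁).2).2 i hi₁, (H _ (key N₂ h₂).1 (key N₂ h₂).2).2 i hi₂]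

theorem module_over_henselian_splits_with_local_supports
    (R T M : Type*) [CommRing R] [IsNoetherianRing R] [HenselianLocalRing R]
    [CommRing T] [Algebra R T]
    [AddCommGroup M] [Module R M] [Module T M] [IsScalarTower R T M]
    [Module.Finite R M] [Nontrivial M] :
    ∃ (n : ℕ) (Mi : Fin n → Submodule T M),
      (∀ i, Mi i ≠ ⊥) ∧ DirectSum.IsInternal Mi ∧
      ∀ i, IsLocalRing (T ⧸ Module.annihilator T ↥(Mi i)) := by
  classical
  let S := (Algebra.lsmul R R M : T →ₐ[R] Module.End R M).range
  let q : T →ₐ[R] S := (Algebra.lsmul R R M : T →ₐ[R] Module.End R M).rangeRestrict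
  have hq : Function.Surjective q := AlgHom.rangeRestrict_surjective _
  have hqv : ∀ t (x : M), (q t).1 x = t • x := fun t x ↦ rfl
  let _ : CommRing S := { (inferInstance : Ring S) with
    mul_comm := by
      intro a b
      obtain ⟨a, rfl⟩ := hq a
      obtain ⟨b, rfl⟩ := hq b
      rw [← map_mul, mul_comm, map_mul] }
  have : Module.Finite R S := inferInstanceAs (Module.Finite R (Subalgebra.toSubmodule S))
  obtain ⟨n, e, he, hN⟩ := hens_idem (R := R) (S := S)
  choose t ht using fun i ↦ hq (e i)
  have hmul : ∀ i j (x : M), t i • t j • x = if i = j then t i • x else 0 := by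
    intro i j x
    rw [← mul_smul, ← hqv, map_mul, ht, ht, he.mul_eq]
    split_ifs
    · rw [← ht, hqv]
    · rfl
  have hsum : ∀ x : M, ∑ i, t i • x = x := by
    intro x
    rw [← Finset.sum_smul, ← hqv, map_sum]
    simp only [ht]
    rw [he.complete]; rfl
  let N : Fin n → Submodule T M := fun i ↦ LinearMap.range (LinearMap.lsmul T M (t i))
  have hNi : ∀ i x, x ∈ N i → t i • x = x := by
    rintro i _ ⟨x, rfl⟩
    simp [hmul]
  have hind : iSupIndep N := by
    intro i
    rw [Submodule.disjoint_def]
    intro x hx hx'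
    have : (⨆ j, ⨆ (_ : j ≠ i), N j) ≤ LinearMap.ker (LinearMap.lsmul T M (t i)) := by
      refine iSup₂_le fun j hj ↦ ?_
      rintro _ ⟨y, rfl⟩
      simp [hmul, hj]
    rw [← hNi i x hx]
    exact this hx'
  have htop : iSup N = ⊤ := by
    rw [eq_top_iff]
    intro x _
    rw [← hsum x]
    exact Submodule.sum_mem _ fun i _ ↦ Submodule.mem_iSup_of_mem i ⟨x, rfl⟩
  have hint : DirectSum.IsInternal N :=
    (DirectSum.isInternal_submodule_iff_iSupIndep_and_iSup_eq_top N).2 ⟨hind, htop⟩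
  have hloc : ∀ i, N i ≠ ⊥ → IsLocalRing (T ⧸ Module.annihilator T (N i)) := by
    intro i hi
    have : Nontrivial (N i) := (Submodule.nontrivial_iff_ne_bot).2 hi
    have : Nontrivial (T ⧸ Module.annihilator T (N i)) := by
      rw [Ideal.Quotient.nontrivial_iff, Ne, Module.annihilator_eq_top_iff]
      exact not_subsingleton _
    have hle : RingHom.ker q ≤ Module.annihilator T (N i) := by
      intro a ha
      rw [Module.mem_annihilator]
      rintro ⟨x, hx⟩
      ext
      change a • x = 0
      rw [← hqv, (RingHom.mem_ker).1 ha]; rfl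
    have h1 : 1 - t i ∈ Module.annihilator T (N i) := by
      rw [Module.mem_annihilator]
      rintro ⟨x, hx⟩
      ext
      change (1 - t i) • x = 0
      rw [sub_smul, hNi i x hx, one_smul, sub_self]
    have key : ∀ I : Ideal (T ⧸ Module.annihilator T (N i)), I.IsMaximal →
        ∃ J : Ideal S, J.IsMaximal ∧ e i ∉ J ∧ J.comap q = I.comap (Ideal.Quotient.mk _) := by
      intro I hI
      set K := I.comap (Ideal.Quotient.mk (Module.annihilator T (N i))) with hK
      have hKm : K.IsMaximal := Ideal.comap_isMaximal_of_surjective _ Ideal.Quotient.mk_surjective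
      have hann : Module.annihilator T (N i) ≤ K := by
        intro a ha
        rw [hK, Ideal.mem_comap, Ideal.Quotient.eq_zero_iff_mem.2 ha]
        exact I.zero_mem
      have hc : (K.map q).comap q = K := by
        rw [Ideal.comap_map_of_surjective q hq, sup_eq_left]
        exact hle.trans hann
      refine ⟨K.map q, ?_, ?_, hc⟩
      · rcases Ideal.map_eq_top_or_isMaximal_of_surjective q hq hKm with h | h
        · rw [h, Ideal.comap_top] at hc
          exact absurd hc.symm hKm.ne_top
        · exact h
      · intro h
        rw [← ht, ← Ideal.mem_comap, hc] at h
        exact hKm.ne_top ((Ideal.eq_top_iff_one _).2 (by simpa using K.add_mem (hann h1) h))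
    obtain ⟨I₀, hI₀⟩ := Ideal.exists_maximal (T ⧸ Module.annihilator T (N i))
    refine IsLocalRing.of_unique_max_ideal ⟨I₀, hI₀, fun I hI ↦ ?_⟩
    obtain ⟨J, hJ, hJe, hJc⟩ := key I hI
    obtain ⟨J₀, hJ₀, hJe₀, hJc₀⟩ := key I₀ hI₀
    apply Ideal.comap_injective_of_surjective _ Ideal.Quotient.mk_surjective
    rw [← hJc, ← hJc₀, hN i J J₀ hJ hJ₀ hJe hJe₀]
  let ι := {i // N i ≠ ⊥}
  let ε := Fintype.equivFin ι
  have hint' : DirectSum.IsInternal fun i : ι ↦ N i := DirectSum.isInternal_ne_bot_iff.2 hint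
  rw [DirectSum.isInternal_submodule_iff_iSupIndep_and_iSup_eq_top] at hint'
  refine ⟨Fintype.card ι, fun i ↦ N (ε.symm i), fun i ↦ (ε.symm i).2, ?_,
    fun i ↦ hloc _ (ε.symm i).2⟩
  rw [DirectSum.isInternal_submodule_iff_iSupIndep_and_iSup_eq_top]
  refine ⟨hint'.1.comp ε.symm.injective, ?_⟩
  rw [← hint'.2]
  exact ε.symm.iSup_comp (g := fun i : ι ↦ N i)
end

section
/- Let R be a Henselian local commutative ring with maximal ideal m and residue field κ = R/m, and let S be an étale R-algebra (i.e. formally étale and of finite presentation over R). Then every R-algebra homomorphism u : S → κ lifts to an R-algebra homomorphism σ : S → R, meaning π ∘ σ = u where π : R → κ is the residue map. -/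
universe u

/-- Lifting along étale algebras over a Henselian local ring: if `R` is Henselian local
with residue field `κ` and `S` is an étale `R`-algebra (formally étale and of finite
presentation), then every `R`-algebra homomorphism `u : S → κ` lifts to an `R`-algebra
homomorphism `σ : S → R` with `π ∘ σ = u`, where `π : R → κ` is the residue map. -/
theorem etale_lift_of_henselian
    (R S : Type u) [CommRing R] [HenselianLocalRing R]
    [CommRing S] [Algebra R S] [Algebra.FormallyEtale R S]
    [Algebra.FinitePresentation R S]
    (u : S →ₐ[R] IsLocalRing.ResidueField R) :
    ∃ σ : S →ₐ[R] R, ∀ s : S, IsLocalRing.residue R (σ s) = u s := by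
  have : Algebra.Etale R S := {}
  have : (RingHom.ker u).IsPrime := RingHom.ker_isPrime _
  obtain ⟨f, hf, hst⟩ := Algebra.IsEtaleAt.exists_isStandardEtale (R := R) (RingHom.ker u)
  have hfu : IsUnit (u f) := isUnit_iff_ne_zero.mpr hf
  let v : Localization.Away f →ₐ[R] IsLocalRing.ResidueField R :=
    IsLocalization.Away.liftAlgHom f (f := u) hfu
  have hv (s : S) : v (algebraMap S _ s) = u s := by simp [v]
  obtain ⟨P⟩ := hst.nonempty_standardEtalePresentation
  have hm := P.hasMap.map v
  obtain ⟨a₀, ha₀⟩ := IsLocalRing.residue_surjective (R := R) (v P.x)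
  have key (p : Polynomial R) (a : R) :
      Polynomial.aeval (IsLocalRing.residue R a) p = IsLocalRing.residue R (p.eval a) :=
    Polynomial.aeval_algebraMap_apply_eq_algebraMap_eval a p
  have hd := StandardEtalePair.HasMap.isUnit_derivative_f _ hm
  have h1 := hm.1
  rw [← ha₀, key] at h1 hd
  obtain ⟨a, ha, haa⟩ := HenselianLocalRing.is_henselian P.f P.monic_f a₀
    ((IsLocalRing.residue_eq_zero_iff _).mp h1) (isUnit_of_map_unit (IsLocalRing.residue R) _ hd)
  have hra : IsLocalRing.residue R a = v P.x := by
    rw [← ha₀, ← sub_eq_zero, ← map_sub, IsLocalRing.residue_eq_zero_iff]; exact haa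
  have hmap : P.HasMap a := by
    refine ⟨by simpa [Polynomial.aeval_def] using ha, ?_⟩
    have h2 := hm.2
    rw [← hra, key] at h2
    simpa [Polynomial.aeval_def] using isUnit_of_map_unit (IsLocalRing.residue R) _ h2
  let τ : Localization.Away f →ₐ[R] R := (P.lift a hmap).comp P.equivRing.toAlgHom
  have hτ : (IsScalarTower.toAlgHom R R (IsLocalRing.ResidueField R)).comp τ = v :=
    P.hom_ext (by simpa [τ] using hra)
  refine ⟨τ.comp (IsScalarTower.toAlgHom R S _), fun s => ?_⟩
  rw [← hv, ← hτ]
  rfl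
end
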